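/- arXiv:2109.02302 — 2 statements merged into one kernel-verified Lean document; each statement's English description precedes it below -/
import Mathlib

section
/- For every finite graph G, there exists n ∈ ℕ and a partition of V(G) into non-empty sets X₁,…,Xₙ such that (1) for every i, the induced subgraph G[Xᵢ] is bipartite and connected, and (2) for every i < j, either there are no edges of G between Xᵢ and Xⱼ, or there exist vertices u₁, u₂ ∈ Xᵢ and v ∈ Xⱼ with u₁v, u₂v ∈ E(G) such that u₁ and u₂ lie on different sides of the bipartition of G[Xᵢ]. -/
/-!
Peel off parts greedily: from the vertices not yet covered, remove an inclusion-maximal set `A` for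
which `G[A]` is connected and bipartite. If a vertex `v` left over has a neighbour in `A`, then
`G[A ∪ {v}]` is still connected, so by maximality it is not bipartite; hence neither side of `A` is
free of neighbours of `v`, since otherwise `v` could be added to that side.
-/

section GreedyPartition

variable {α : Type*} {P : Set α → Prop} {S : Set α}

theorem exists_mem_maximal_subset_of_singleton (hS : S.Finite) {s : α} (hs : s ∈ S)
    (hP : P {s}) : ∃ A, s ∈ A ∧ Maximal (fun A ↦ A ⊆ S ∧ P A) A := by
  have hfin : {A | A ⊆ S ∧ P A}.Finite := hS.finite_subsets.subset fun _ hA ↦ hA.1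
  obtain ⟨A, hsA, hA⟩ := hfin.exists_le_maximal ⟨Set.singleton_subset_iff.2 hs, hP⟩
  exact ⟨A, hsA rfl, hA⟩

theorem exists_list_partition_pairwise_not_insert (hS : S.Finite) (hP : ∀ v ∈ S, P {v}) :
    ∃ l : List (Set α), (⋃ A ∈ l, A) = S ∧ (∀ A ∈ l, A.Nonempty ∧ P A) ∧
      l.Pairwise Disjoint ∧ l.Pairwise fun A B ↦ ∀ v ∈ B, ¬ P (insert v A) := by
  induction hn : S.ncard using Nat.strong_induction_on generalizing S with
  | _ n ih =>
  subst hn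
  rcases S.eq_empty_or_nonempty with rfl | ⟨s, hs⟩
  · exact ⟨[], by simp⟩
  obtain ⟨A, hsA, ⟨hAS, hPA⟩, hmax⟩ := exists_mem_maximal_subset_of_singleton hS hs (hP s hs)
  have hAne : A.Nonempty := ⟨s, hsA⟩
  have hlt : (S \ A).ncard < S.ncard :=
    Set.ncard_lt_ncard (hAS.sdiff_ssubset_of_nonempty hAne) hS
  obtain ⟨l, hunion, hl, hdisj, hins⟩ := ih _ hlt hS.sdiff (fun v hv ↦ hP v hv.1) rfl
  have hsub : ∀ B ∈ l, B ⊆ S \ A := fun B hB ↦ hunion ▸ Set.subset_biUnion_of_mem (u := id) hB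
  refine ⟨A :: l, ?_, List.forall_mem_cons.2 ⟨⟨hAne, hPA⟩, hl⟩,
    List.pairwise_cons.2 ⟨fun B hB ↦ ?_, hdisj⟩,
    List.pairwise_cons.2 ⟨fun B hB v hv hPv ↦ ?_, hins⟩⟩
  · simp only [List.mem_cons, Set.iUnion_iUnion_eq_or_left, hunion, Set.union_sdiff_cancel hAS]
  · exact Set.disjoint_sdiff_right.mono_right (hsub B hB)
  · obtain ⟨hvS, hvA⟩ := hsub B hB hv
    exact hvA (hmax ⟨Set.insert_subset hvS hAS, hPv⟩ (Set.subset_insert v A) (Set.mem_insert v A))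

theorem existsUnique_mem_get_of_pairwise_disjoint {l : List (Set α)} (hl : l.Pairwise Disjoint)
    {v : α} (hv : v ∈ ⋃ A ∈ l, A) : ∃! i, v ∈ l.get i := by
  obtain ⟨A, hA, hvA⟩ := Set.mem_iUnion₂.1 hv
  obtain ⟨i, rfl⟩ := List.get_of_mem hA
  have hdisj := List.pairwise_iff_get.1 hl
  refine ⟨i, hvA, fun j hvj ↦ ?_⟩
  rcases lt_trichotomy j i with hji | hji | hij
  · exact (Set.disjoint_left.1 (hdisj j i hji) hvj hvA).elim
  · exact hji
  · exact (Set.disjoint_left.1 (hdisj i j hij) hvA hvj).elim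

end GreedyPartition

section Coloring

variable {V : Type*} {G : SimpleGraph V}

/-- `u` and `v` lie on different sides of the bipartition of the connected bipartite graph `G`,
encoded as: every proper colouring of `G` with two colours separates them. -/
def OnOppositeSides (G : SimpleGraph V) (u v : V) : Prop :=
  ∀ c : G.Coloring Bool, c u ≠ c v

theorem onOppositeSides_of_coloring_ne {u v : V} (huv : G.Reachable u v) (c : G.Coloring Bool)
    (hne : c u ≠ c v) : OnOppositeSides G u v := by
  obtain ⟨p⟩ := huv
  intro d
  rw [Ne, Bool.eq_iff_iff] at hne ⊢
  rwa [← d.even_length_iff_congr p, c.even_length_iff_congr p]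

theorem OnOppositeSides.ne_of_forall_adj_ne {A : Set V} {u v : A}
    (h : OnOppositeSides (G.induce A) u v) {c : V → Bool}
    (hc : ∀ x ∈ A, ∀ y ∈ A, G.Adj x y → c x ≠ c y) : c u ≠ c v :=
  h (.mk (fun x ↦ c x) fun {x y} hxy ↦ hc x x.2 y y.2 hxy)

theorem nonempty_coloring_induce_insert {α : Type*} {A : Set V} {v : V}
    (c : (G.induce A).Coloring α) (a : α) (ha : ∀ u : A, G.Adj u v → c u ≠ a) :
    Nonempty ((G.induce (insert v A)).Coloring α) := by
  classical
  refine ⟨.mk (fun x ↦ if hx : x.1 ∈ A then c ⟨x, hx⟩ else a) ?_⟩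
  rintro ⟨x, hx⟩ ⟨y, hy⟩ (hxy : G.Adj x y)
  by_cases hxA : x ∈ A <;> by_cases hyA : y ∈ A
  · simpa only [hxA, hyA, dif_pos] using c.valid (v := ⟨x, hxA⟩) (w := ⟨y, hyA⟩) hxy
  · obtain rfl := hy.resolve_right hyA
    simpa only [hxA, hyA, dif_pos, dif_neg, not_false_eq_true] using ha ⟨x, hxA⟩ hxy
  · obtain rfl := hx.resolve_right hxA
    simpa only [hxA, hyA, dif_pos, dif_neg, not_false_eq_true] using (ha ⟨y, hyA⟩ hxy.symm).symm
  · obtain rfl := hx.resolve_right hxA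
    obtain rfl := hy.resolve_right hyA
    exact (G.irrefl hxy).elim

theorem exists_adj_coloring_eq_of_not_colorable_insert {α : Type*} [Fintype α] {A : Set V} {v : V}
    (hv : ¬ (G.induce (insert v A)).Colorable (Fintype.card α)) (c : (G.induce A).Coloring α)
    (a : α) : ∃ u : A, G.Adj u v ∧ c u = a := by
  by_contra! ha
  obtain ⟨d⟩ := nonempty_coloring_induce_insert c a ha
  exact hv d.colorable

theorem exists_adj_onOppositeSides_of_not_colorable_insert {A : Set V} {v : V}
    (hA : (G.induce A).Preconnected) (hA₂ : (G.induce A).Colorable 2)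
    (hv : ¬ (G.induce (insert v A)).Colorable 2) :
    ∃ u₁ u₂ : A, G.Adj u₁ v ∧ G.Adj u₂ v ∧ OnOppositeSides (G.induce A) u₁ u₂ := by
  let c : (G.induce A).Coloring Bool := hA₂.toColoring le_rfl
  obtain ⟨u₁, hu₁, hc₁⟩ := exists_adj_coloring_eq_of_not_colorable_insert hv c true
  obtain ⟨u₂, hu₂, hc₂⟩ := exists_adj_coloring_eq_of_not_colorable_insert hv c false
  exact ⟨u₁, u₂, hu₁, hu₂, onOppositeSides_of_coloring_ne (hA u₁ u₂) c (by simp [hc₁, hc₂])⟩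

end Coloring

section ConnectedBipartite

variable {V : Type*} {G : SimpleGraph V} {A : Set V} {v : V}

/-- `A` induces a connected bipartite subgraph of `G`; the property of the parts that the greedy
partition maximises. -/
def IsConnectedBipartiteOn (G : SimpleGraph V) (A : Set V) : Prop :=
  (G.induce A).Connected ∧ (G.induce A).Colorable 2

theorem isConnectedBipartiteOn_singleton (G : SimpleGraph V) (v : V) :
    IsConnectedBipartiteOn G {v} :=
  ⟨.of_subsingleton, (G.induce {v}).colorable_of_fintype.mono (by simp)⟩

theorem IsConnectedBipartiteOn.exists_adj_onOppositeSides (hA : IsConnectedBipartiteOn G A)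
    (hv : ¬ IsConnectedBipartiteOn G (insert v A)) {u : V} (hu : u ∈ A) (huv : G.Adj u v) :
    ∃ u₁ u₂ : A, G.Adj u₁ v ∧ G.Adj u₂ v ∧ OnOppositeSides (G.induce A) u₁ u₂ := by
  have hconn : (G.induce (insert v A)).Connected :=
    SimpleGraph.connected_induce_union (s := {v}) .of_subsingleton hA.1.preconnected rfl hu huv.symm
  exact exists_adj_onOppositeSides_of_not_colorable_insert hA.1.preconnected hA.2
    fun hcol ↦ hv ⟨hconn, hcol⟩

end ConnectedBipartite

theorem stmt0 {V : Type*} [Fintype V] (G : SimpleGraph V) :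
    ∃ (n : ℕ) (X : Fin n → Set V),
      (∀ i, (X i).Nonempty) ∧
      (∀ v : V, ∃! i, v ∈ X i) ∧
      (∀ i, (G.induce (X i)).Connected ∧ (G.induce (X i)).Colorable 2) ∧
      (∀ i j : Fin n, i < j →
        (∀ u ∈ X i, ∀ v ∈ X j, ¬ G.Adj u v) ∨
        (∃ u₁ ∈ X i, ∃ u₂ ∈ X i, ∃ v ∈ X j, G.Adj u₁ v ∧ G.Adj u₂ v ∧
          ∀ c : V → Bool, (∀ x ∈ X i, ∀ y ∈ X i, G.Adj x y → c x ≠ c y) →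
            c u₁ ≠ c u₂)) := by
  obtain ⟨l, hunion, hl, hdisj, hins⟩ := exists_list_partition_pairwise_not_insert Set.finite_univ
    fun v _ ↦ isConnectedBipartiteOn_singleton G v
  have hl' (i) : (l.get i).Nonempty ∧ IsConnectedBipartiteOn G (l.get i) := hl _ (l.get_mem i)
  refine ⟨l.length, l.get, fun i ↦ (hl' i).1,
    fun v ↦ existsUnique_mem_get_of_pairwise_disjoint hdisj (hunion ▸ Set.mem_univ v),
    fun i ↦ (hl' i).2, fun i j hij ↦ or_iff_not_imp_left.2 fun hadj ↦ ?_⟩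
  push Not at hadj
  obtain ⟨u, hu, v, hv, huv⟩ := hadj
  have hmax : ¬ IsConnectedBipartiteOn G (insert v (l.get i)) :=
    List.pairwise_iff_get.1 hins i j hij v hv
  obtain ⟨u₁, u₂, hu₁, hu₂, hopp⟩ := (hl' i).2.exists_adj_onOppositeSides hmax hu huv
  exact ⟨u₁, u₁.2, u₂, u₂.2, v, hv, hu₁, hu₂, fun _ ↦ hopp.ne_of_forall_adj_ne⟩
end

section
/- Let t ∈ ℕ and let f(t) be an integer such that every finite graph with no K_t-minor has chromatic number at most f(t). Then every finite graph with no odd K_t-minor has chromatic number at most 2·f(t). -/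
/-- `G` contains `K t` as a minor: there are `t` pairwise vertex-disjoint subtrees of `G`
with at least one edge of `G` between any two of them. -/
def HasKMinor {V : Type*} (G : SimpleGraph V) (t : ℕ) : Prop :=
  ∃ T : Fin t → G.Subgraph,
    (∀ i, (T i).coe.IsTree) ∧
    (Pairwise fun i j => Disjoint (T i).verts (T j).verts) ∧
    (∀ i j : Fin t, i ≠ j → ∃ u ∈ (T i).verts, ∃ v ∈ (T j).verts, G.Adj u v)

/-- `G` contains `K t` as an odd minor: there are `t` pairwise vertex-disjoint subtrees of `G`,
one connecting edge `e i j` of `G` between any two of them, and a `2`-coloring `c` of the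
vertices making every tree edge bichromatic and every connecting edge monochromatic. -/
def HasOddKMinor {V : Type*} (G : SimpleGraph V) (t : ℕ) : Prop :=
  ∃ (T : Fin t → G.Subgraph) (e : Fin t → Fin t → V × V) (c : V → Bool),
    (∀ i, (T i).coe.IsTree) ∧
    (Pairwise fun i j => Disjoint (T i).verts (T j).verts) ∧
    (∀ i j : Fin t, i ≠ j →
      (e i j).1 ∈ (T i).verts ∧ (e i j).2 ∈ (T j).verts ∧ G.Adj (e i j).1 (e i j).2) ∧
    (∀ i, ∀ u v : V, (T i).Adj u v → c u ≠ c v) ∧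
    (∀ i j : Fin t, i ≠ j → c (e i j).1 = c (e i j).2)

/-!
Among the partitions of the vertices of a finite graph `G` into connected bipartite induced
subgraphs, take a coarsest one, and 2-colour its parts. If two parts are joined by an edge, then
they are joined both by a monochromatic edge and by a bichromatic one: otherwise the 2-colouring,
flipped on one of the parts if necessary, would be proper on their union, and they could be merged.
Hence a `K_t`-expansion in the graph obtained by contracting the parts lifts to an odd one in `G`:
use bichromatic edges inside the trees and monochromatic edges between them. So if `G` has no odd
`K_t`-minor, the contracted graph has an `f`-colouring, and its product with the 2-colouring is
proper on `G`. Infinite graphs follow by compactness.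
-/

open SimpleGraph

section

variable {V W ι α : Type*} {G H : SimpleGraph V} {p : V → ι} {c : V → α} {t m n : ℕ}

/-- The spanning subgraph of the edges of `G` whose ends have the same colour under `c`, which need
not be a proper colouring. When `c` maps each vertex to its part in a partition, these are the edges
inside the parts. -/
def monochromatic (G : SimpleGraph V) (c : V → α) : SimpleGraph V where
  Adj u v := G.Adj u v ∧ c u = c v
  symm := ⟨fun _ _ h => ⟨h.1.symm, h.2.symm⟩⟩
  loopless := ⟨fun _ h => h.1.ne rfl⟩

/-- The spanning subgraph of the edges of `G` whose ends have different colours under `c`, which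
need not be a proper colouring. -/
def bichromatic (G : SimpleGraph V) (c : V → α) : SimpleGraph V where
  Adj u v := G.Adj u v ∧ c u ≠ c v
  symm := ⟨fun _ _ h => ⟨h.1.symm, h.2.symm⟩⟩
  loopless := ⟨fun _ h => h.1.ne rfl⟩

theorem eq_of_reachable_monochromatic {u v : V} (h : (monochromatic G c).Reachable u v) :
    c u = c v := by
  obtain ⟨w⟩ := h
  induction w with
  | nil => rfl
  | cons huv _ ih => exact huv.2.trans ih

theorem colorable_mul_of_colorable_map (hmap : (G.map p).Colorable m)
    (hmono : (monochromatic G p).Colorable n) : G.Colorable (m * n) := by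
  obtain ⟨C⟩ := hmap
  obtain ⟨D⟩ := hmono
  let E : G.Coloring (Fin m × Fin n) :=
    Coloring.mk (fun v => (C (p v), D v)) fun {u v} huv heq => by
      obtain ⟨hC, hD⟩ := Prod.mk.inj heq
      by_cases hp : p u = p v
      · exact D.valid (⟨huv, hp⟩ : (monochromatic G p).Adj u v) hD
      · exact C.valid (map_adj_apply' huv hp) hC
  simpa using E.colorable

theorem connected_induce_preimage (hp : ∀ i, (G.induce (p ⁻¹' {i})).Connected) {S : Set ι}
    (hS : ((G.map p).induce S).Connected) : (G.induce (p ⁻¹' S)).Connected := by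
  have reachable_of_eq (u v : p ⁻¹' S) (huv : p u = p v) : (G.induce (p ⁻¹' S)).Reachable u v := by
    have hsub : p ⁻¹' {p v} ⊆ p ⁻¹' S := Set.preimage_mono (Set.singleton_subset_iff.2 v.2)
    exact ((hp (p v)).preconnected ⟨u, huv⟩ ⟨v, rfl⟩).map (induceHomOfLE G hsub).toHom
  have reachable_of_walk {i j : S} (w : ((G.map p).induce S).Walk i j) (u v : p ⁻¹' S)
      (hu : p u = i) (hv : p v = j) : (G.induce (p ⁻¹' S)).Reachable u v := by
    induction w generalizing u with
    | nil => exact reachable_of_eq u v (hu.trans hv.symm)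
    | @cons i k j hik _ ih =>
      obtain ⟨-, x, y, hxy, hx, hy⟩ := hik
      let x' : p ⁻¹' S := ⟨x, show p x ∈ S from hx ▸ i.2⟩
      let y' : p ⁻¹' S := ⟨y, show p y ∈ S from hy ▸ k.2⟩
      have hxy' : (G.induce (p ⁻¹' S)).Adj x' y' := hxy
      exact ((reachable_of_eq u x' (hu.trans hx.symm)).trans hxy'.reachable).trans (ih y' hy hv)
  obtain ⟨i⟩ := hS.nonempty
  obtain ⟨u, hu : p u = i⟩ := (hp i).nonempty
  have : Nonempty (p ⁻¹' S) := ⟨⟨u, show p u ∈ S from hu ▸ i.2⟩⟩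
  refine ⟨fun u v => ?_⟩
  obtain ⟨w⟩ := hS.preconnected ⟨p u, u.2⟩ ⟨p v, v.2⟩
  exact reachable_of_walk w u v rfl rfl

theorem exists_subgraph_isTree_of_connected {B : Set V}
    (hB : ((bichromatic G c).induce B).Connected) :
    ∃ T : G.Subgraph, T.verts = B ∧ T.coe.IsTree ∧ ∀ u v, T.Adj u v → c u ≠ c v := by
  obtain ⟨F, hF, hFT⟩ := hB.exists_isTree_le
  refine ⟨{ verts := B
            Adj u v := ∃ (hu : u ∈ B) (hv : v ∈ B), F.Adj ⟨u, hu⟩ ⟨v, hv⟩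
            adj_sub := fun ⟨_, _, h⟩ => (hF h).1
            edge_vert := fun ⟨hu, _, _⟩ => hu
            symm := ⟨fun _ _ ⟨hu, hv, h⟩ => ⟨hv, hu, h.symm⟩⟩ }, rfl, ?_, fun _ _ h => ?_⟩
  · convert hFT using 1
    ext u v
    simp
  · obtain ⟨_, _, huv⟩ := h
    exact (hF huv).2

theorem hasOddKMinor_iff_exists_connected : HasOddKMinor G t ↔ ∃ (B : Fin t → Set V) (c : V → Bool),
    (∀ i, ((bichromatic G c).induce (B i)).Connected) ∧
    (Pairwise fun i j => Disjoint (B i) (B j)) ∧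
    ∀ i j, i ≠ j → ∃ u ∈ B i, ∃ v ∈ B j, (monochromatic G c).Adj u v := by
  constructor
  · rintro ⟨T, e, c, hT, hdisj, he, hc, hec⟩
    exact ⟨fun i => (T i).verts, c,
      fun i => (hT i).connected.mono fun u v h => ⟨(T i).adj_sub h, hc i u v h⟩, hdisj,
      fun i j hij => ⟨_, (he i j hij).1, _, (he i j hij).2.1, (he i j hij).2.2, hec i j hij⟩⟩
  · rintro ⟨B, c, hconn, hdisj, hadj⟩
    choose T hTB hT hc using fun i => exists_subgraph_isTree_of_connected (hconn i)
    obtain rfl : (fun i => (T i).verts) = B := funext hTB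
    have hedge (i j : Fin t) : ∃ e : V × V, i ≠ j →
        e.1 ∈ (T i).verts ∧ e.2 ∈ (T j).verts ∧ (monochromatic G c).Adj e.1 e.2 := by
      obtain rfl | hij := eq_or_ne i j
      · obtain ⟨x⟩ := (hconn i).nonempty
        exact ⟨(x, x), fun h => absurd rfl h⟩
      · obtain ⟨u, hu, v, hv, huv⟩ := hadj i j hij
        exact ⟨(u, v), fun _ => ⟨hu, hv, huv⟩⟩
    choose e he using hedge
    exact ⟨T, e, c, hT, hdisj,
      fun i j hij => ⟨(he i j hij).1, (he i j hij).2.1, (he i j hij).2.2.1⟩, hc,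
      fun i j hij => (he i j hij).2.2.2⟩

theorem HasOddKMinor.map {G' : SimpleGraph W} (h : HasOddKMinor G t) (φ : G →g G')
    (hφ : Function.Injective φ) : HasOddKMinor G' t := by
  obtain ⟨B, c, hconn, hdisj, hadj⟩ := hasOddKMinor_iff_exists_connected.1 h
  obtain ⟨d, hd⟩ : ∃ d : W → Bool, ∀ v, d (φ v) = c v :=
    ⟨Function.extend φ c fun _ => false, hφ.extend_apply _ _⟩
  refine hasOddKMinor_iff_exists_connected.2 ⟨fun i => φ '' B i, d, fun i => ?_,
    fun i j hij => (Set.disjoint_image_iff hφ).2 (hdisj hij), fun i j hij => ?_⟩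
  · let ψ : bichromatic G c →g bichromatic G' d :=
      ⟨φ, fun {u v} huv => ⟨φ.map_adj huv.1, by simpa only [hd] using huv.2⟩⟩
    exact (hconn i).map (induceHom ψ (Set.mapsTo_image φ (B i)))
      (Set.surjective_mapsTo_image_restrict φ (B i))
  · obtain ⟨u, hu, v, hv, huv, hc⟩ := hadj i j hij
    exact ⟨φ u, Set.mem_image_of_mem φ hu, φ v, Set.mem_image_of_mem φ hv, φ.map_adj huv,
      by simpa only [hd] using hc⟩

theorem hasOddKMinor_of_hasKMinor_map {c : V → Bool}
    (hp : ∀ i, ((bichromatic G c).induce (p ⁻¹' {i})).Connected)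
    (hbi : G.map p ≤ (bichromatic G c).map p) (hmono : G.map p ≤ (monochromatic G c).map p)
    (h : HasKMinor (G.map p) t) : HasOddKMinor G t := by
  obtain ⟨T, hT, hdisj, hadj⟩ := h
  refine hasOddKMinor_iff_exists_connected.2 ⟨fun i => p ⁻¹' (T i).verts, c, fun i => ?_,
    fun i j hij => (hdisj hij).preimage p, fun i j hij => ?_⟩
  · exact connected_induce_preimage hp
      ((hT i).connected.mono fun _ _ huv => hbi ((T i).adj_sub huv))
  · obtain ⟨_, hu, _, hv, hadj_map⟩ := hadj i j hij
    obtain ⟨-, u, v, huv, rfl, rfl⟩ := hmono hadj_map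
    exact ⟨u, hu, v, hv, huv⟩

/-- `H` is the disjoint union of connected bipartite induced subgraphs of `G` that partition the
vertex set. The parts are encoded as the connected components of `H`, and the equation says that
each of them is induced. -/
structure IsBipartiteDecomposition (G H : SimpleGraph V) : Prop where
  isBipartite : H.IsBipartite
  monochromatic_eq : monochromatic G H.connectedComponentMk = H

theorem IsBipartiteDecomposition.le (h : IsBipartiteDecomposition G H) : H ≤ G := by
  rw [← h.monochromatic_eq]
  exact fun _ _ huv => huv.1

theorem IsBipartiteDecomposition.adj (h : IsBipartiteDecomposition G H) {u v : V}
    (huv : G.Adj u v) (hmk : H.connectedComponentMk u = H.connectedComponentMk v) : H.Adj u v := by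
  rw [← h.monochromatic_eq]
  exact ⟨huv, hmk⟩

theorem isBipartiteDecomposition_monochromatic (h : (monochromatic G p).IsBipartite) :
    IsBipartiteDecomposition G (monochromatic G p) where
  isBipartite := h
  monochromatic_eq := by
    ext u v
    exact ⟨fun huv => ⟨huv.1, eq_of_reachable_monochromatic (ConnectedComponent.exact huv.2)⟩,
      fun huv => ⟨huv.1, ConnectedComponent.sound huv.reachable⟩⟩

theorem exists_maximal_isBipartiteDecomposition [Finite V] (G : SimpleGraph V) :
    ∃ H, Maximal (IsBipartiteDecomposition G) H := by
  have hid : (monochromatic G (id : V → V)).IsBipartite :=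
    ⟨Coloring.mk (fun _ => 0) fun huv _ => huv.1.ne huv.2⟩
  exact (Set.toFinite {H | IsBipartiteDecomposition G H}).exists_maximal
    ⟨_, isBipartiteDecomposition_monochromatic hid⟩

theorem map_le_map_monochromatic_of_maximal (hH : Maximal (IsBipartiteDecomposition G) H)
    (c : H.Coloring Bool) :
    G.map H.connectedComponentMk ≤ (monochromatic G c).map H.connectedComponentMk := by
  classical
  rintro a b ⟨hab, u, v, huv, hu, hv⟩
  by_contra hno
  have hne {x y : V} (hxy : G.Adj x y) (hx : H.connectedComponentMk x = a)
      (hy : H.connectedComponentMk y = b) : c x ≠ c y := fun hc =>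
    hno ⟨hab, x, y, ⟨hxy, hc⟩, hx, hy⟩
  let merge (x : V) : H.ConnectedComponent :=
    if H.connectedComponentMk x = b then a else H.connectedComponentMk x
  have hproper : ∀ {x y : V}, (monochromatic G merge).Adj x y → c x ≠ c y := by
    rintro x y ⟨hxy, hmerge⟩
    by_cases hmk : H.connectedComponentMk x = H.connectedComponentMk y
    · exact c.valid (hH.prop.adj hxy hmk)
    · have hends : H.connectedComponentMk x = a ∧ H.connectedComponentMk y = b ∨
          H.connectedComponentMk y = a ∧ H.connectedComponentMk x = b := by
        grind
      rcases hends with ⟨hx, hy⟩ | ⟨hy, hx⟩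
      · exact hne hxy hx hy
      · exact (hne hxy.symm hy hx).symm
  have hle : H ≤ monochromatic G merge := fun x y hxy =>
    ⟨hH.prop.le hxy, by simp only [merge, ConnectedComponent.connectedComponentMk_eq_of_adj hxy]⟩
  have hdecomp : IsBipartiteDecomposition G (monochromatic G merge) :=
    isBipartiteDecomposition_monochromatic (Coloring.mk c hproper).colorable
  have hHuv : H.Adj u v := hH.le_of_ge hdecomp hle ⟨huv, by simp [merge, hu, hv]⟩
  exact hab (hu ▸ hv ▸ ConnectedComponent.connectedComponentMk_eq_of_adj hHuv)

theorem map_le_map_bichromatic_of_maximal (hH : Maximal (IsBipartiteDecomposition G) H)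
    (c : H.Coloring Bool) :
    G.map H.connectedComponentMk ≤ (bichromatic G c).map H.connectedComponentMk := by
  classical
  intro a b hab
  let flipped : H.Coloring Bool :=
    Coloring.mk (fun x => c x ^^ decide (H.connectedComponentMk x = b)) fun {x y} hxy => by
      simpa [ConnectedComponent.connectedComponentMk_eq_of_adj hxy] using c.valid hxy
  obtain ⟨hne, u, v, ⟨huv, hflipped⟩, rfl, rfl⟩ :=
    map_le_map_monochromatic_of_maximal hH flipped hab
  have hreach : ¬ H.Reachable u v := fun huv => hne (ConnectedComponent.sound huv)
  have hc : c u = !c v := by simpa [flipped, Coloring.mk, hreach] using hflipped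
  exact ⟨hne, u, v, ⟨huv, by simp [hc]⟩, rfl, rfl⟩

theorem hasOddKMinor_of_maximal (hH : Maximal (IsBipartiteDecomposition G) H)
    (h : HasKMinor (G.map H.connectedComponentMk) t) : HasOddKMinor G t := by
  let c : H.Coloring Bool := hH.prop.isBipartite.toColoring (by simp)
  have hHc : H ≤ bichromatic G c := fun _ _ huv => ⟨hH.prop.le huv, c.valid huv⟩
  exact hasOddKMinor_of_hasKMinor_map
    (fun a => a.connected_toSimpleGraph.mono fun _ _ huv => hHc huv)
    (map_le_map_bichromatic_of_maximal hH c) (map_le_map_monochromatic_of_maximal hH c) h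

theorem colorable_of_forall_fin
    (h : ∀ (k : ℕ) (K : SimpleGraph (Fin k)) (φ : K →g G), Function.Injective φ → K.Colorable n) :
    G.Colorable n := by
  refine nonempty_hom_of_forall_finite_subgraph_hom fun G' hG' => Nonempty.some ?_
  have := hG'.fintype
  let e := G'.coe.overFinIso rfl
  exact (h _ _ (G'.hom.comp e.symm.toHom) (G'.hom_injective.comp e.symm.injective)).of_hom e.toHom

end

theorem stmt5_general {t f : ℕ}
    (h : ∀ (V : Type) [Fintype V] (G : SimpleGraph V),
      ¬ HasKMinor G t → G.chromaticNumber ≤ (f : ℕ∞))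
    {V : Type*} (G : SimpleGraph V) (hG : ¬ HasOddKMinor G t) :
    G.chromaticNumber ≤ (2 * f : ℕ∞) := by
  suffices G.Colorable (f * 2) by simpa [mul_comm] using this.chromaticNumber_le
  refine colorable_of_forall_fin fun k K φ hφ => ?_
  obtain ⟨H, hH⟩ := exists_maximal_isBipartiteDecomposition K
  have := Fintype.ofFinite H.ConnectedComponent
  have hmap : (K.map H.connectedComponentMk).Colorable f :=
    chromaticNumber_le_iff_colorable.1 <| h _ _ fun hK =>
      hG ((hasOddKMinor_of_maximal hH hK).map φ hφ)
  exact colorable_mul_of_colorable_map hmap (hH.prop.monochromatic_eq.symm ▸ hH.prop.isBipartite)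

theorem stmt5 (t f : ℕ)
    (h : ∀ (V : Type) [Fintype V] (G : SimpleGraph V),
      ¬ HasKMinor G t → G.chromaticNumber ≤ (f : ℕ∞)) :
    ∀ (V : Type) [Fintype V] (G : SimpleGraph V),
      ¬ HasOddKMinor G t → G.chromaticNumber ≤ (2 * f : ℕ∞) :=
  fun _ _ G => stmt5_general h G
end
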